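/- Let n ≥ 1 and let σ, a ∈ ℝ^n with σ_1 ≥ σ_2 ≥ ... ≥ σ_n. Then the minimum, over all doubly stochastic matrices Π ∈ ℝ^{n×n} (i.e. Π_{ij} ≥ 0 with every row sum and every column sum equal to 1), of Σ_{i=1}^n (Πσ)_i · a_i equals Σ_{i=1}^n σ_i · a_{(i)}, where a_{(1)} ≤ a_{(2)} ≤ ... ≤ a_{(n)} is the nondecreasing rearrangement of the components of a. -/

import Mathlib

theorem stmt_19 (n : ℕ) (hn : 1 ≤ n) (σ a : Fin n → ℝ)
    (hσ : Antitone σ)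
    (π : Equiv.Perm (Fin n)) (hπ : Monotone (fun i => a (π i))) :
    IsLeast {val : ℝ | ∃ P : Fin n → Fin n → ℝ,
        (∀ i j, 0 ≤ P i j) ∧
        (∀ i, ∑ j, P i j = 1) ∧
        (∀ j, ∑ i, P i j = 1) ∧
        val = ∑ i, (∑ j, P i j * σ j) * a i}
      (∑ i, σ i * a (π i)) := by
  constructor
  · refine ⟨fun i j => if π.symm i = j then 1 else 0, ?_, ?_, ?_, ?_⟩
    · intro i j
      dsimp only
      split_ifs <;> norm_num
    · intro i
      simp
    · intro j
      simp [Equiv.symm_apply_eq]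
    · simp only [ite_mul, one_mul, zero_mul, Finset.sum_ite_eq, Finset.mem_univ, if_true]
      rw [← Equiv.sum_comp π (fun i => σ (π.symm i) * a i)]
      simp
  · rintro _ ⟨P, h0, h1, h2, rfl⟩
    have hP : (Matrix.of P) ∈ doublyStochastic ℝ (Fin n) :=
      mem_doublyStochastic_iff_sum.2 ⟨h0, h1, h2⟩
    obtain ⟨w, hw0, hw1, hw⟩ := exists_eq_sum_perm_of_mem_doublyStochastic hP
    have hPe : ∀ i j, P i j = ∑ τ : Equiv.Perm (Fin n), w τ * (if τ i = j then 1 else 0) := by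
      intro i j
      have := congrFun (congrFun hw i) j
      simp only [Matrix.sum_apply, Matrix.smul_apply, Equiv.Perm.permMatrix,
        PEquiv.toMatrix_apply, Equiv.toPEquiv_apply, Matrix.of_apply, smul_eq_mul,
        Option.mem_def, Option.some.injEq] at this
      exact this.symm
    have hrow : ∀ i, ∑ j, P i j * σ j = ∑ τ : Equiv.Perm (Fin n), w τ * σ (τ i) := by
      intro i
      simp only [hPe, Finset.sum_mul]
      rw [Finset.sum_comm]
      simp
    have hav : Antivary σ (fun i => a (π i)) := hσ.antivary hπ
    have hval : ∑ i, (∑ j, P i j * σ j) * a i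
        = ∑ τ : Equiv.Perm (Fin n), w τ * ∑ i, σ (τ i) * a i := by
      simp only [hrow, Finset.sum_mul, Finset.mul_sum]
      rw [Finset.sum_comm]
      simp only [mul_assoc]
    rw [hval]
    calc ∑ i, σ i * a (π i) = ∑ τ : Equiv.Perm (Fin n), w τ * ∑ i, σ i * a (π i) := by
          rw [← Finset.sum_mul, hw1, one_mul]
      _ ≤ _ := by
          refine Finset.sum_le_sum fun τ _ => mul_le_mul_of_nonneg_left ?_ (hw0 τ)
          have := hav.sum_mul_le_sum_comp_perm_mul (σ := π.trans τ)
          rw [← Equiv.sum_comp π (fun i => σ (τ i) * a i)]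
          exact this
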